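/- For all real x > 0, x ≤ (π/2)·arsinh(q(x))·√(1 + q(x)²), where q(x) = x/arsinh x. -/

import Mathlib

open Real

/-- `q(x) = x / arsinh x`. -/
noncomputable def qf (x : ℝ) : ℝ := x / Real.arsinh x

/-!
Put `t = arsinh x` and `s = arsinh (q x)`, so that `sinh s = sinh t / t` and the claim becomes
`t ≤ (π / 2) * s * coth s`. Since `s * coth s ≥ log (2 * cosh s)`, it is enough that
`exp (4 * t / π) ≤ 4 * cosh s ^ 2 = 4 * (1 + (sinh t / t) ^ 2)`, and there is room to replace
`4 / π` by `32 / 25`. For `t ^ 2 ≤ 2` the right side is at least `8`. For `t ^ 2 ≥ 2` it is at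
least `3 + (exp t / t) ^ 2`, and the tangent line of `log` at `3`, which is close to the worst
case `t ≈ 3.1`, replaces `exp t / t` by a pure exponential, so that convexity of `exp` suffices.
-/

theorem log_two_mul_cosh_le (s : ℝ) : log (2 * cosh s) ≤ s + exp (-(2 * s)) := by
  have factor : 2 * cosh s = exp s * (1 + exp (-(2 * s))) := by
    rw [cosh_eq, mul_add, ← exp_add]
    ring_nf
  rw [factor, log_mul (exp_ne_zero s) (by positivity), log_exp]
  gcongr
  linarith [log_le_sub_one_of_pos (show 0 < 1 + exp (-(2 * s)) by positivity)]

theorem sinh_mul_exp_neg_le_self (s : ℝ) : sinh s * exp (-s) ≤ s := by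
  have expand : sinh s * exp (-s) = (1 - exp (-(2 * s))) / 2 := by
    rw [sinh_eq, div_mul_eq_mul_div, sub_mul, ← exp_add, ← exp_add, add_neg_cancel, exp_zero]
    ring_nf
  linarith [one_sub_le_exp_neg (2 * s)]

theorem sinh_mul_log_two_mul_cosh_le {s : ℝ} (hs : 0 ≤ s) :
    sinh s * log (2 * cosh s) ≤ s * cosh s := by
  calc sinh s * log (2 * cosh s)
      ≤ sinh s * (s + exp (-(2 * s))) :=
        mul_le_mul_of_nonneg_left (log_two_mul_cosh_le s) (sinh_nonneg_iff.2 hs)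
    _ = sinh s * s + sinh s * exp (-s) * exp (-s) := by
        rw [mul_assoc (sinh s) (exp (-s)), ← exp_add]; ring_nf
    _ ≤ sinh s * s + s * exp (-s) := by gcongr; exact sinh_mul_exp_neg_le_self s
    _ = s * cosh s := by rw [← cosh_sub_sinh]; ring

theorem mul_log_two_mul_sqrt_le_arsinh_mul_sqrt {y : ℝ} (hy : 0 ≤ y) :
    y * log (2 * √(1 + y ^ 2)) ≤ arsinh y * √(1 + y ^ 2) := by
  simpa only [sinh_arsinh, cosh_arsinh] using
    sinh_mul_log_two_mul_cosh_le (arsinh_nonneg_iff.2 hy)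

theorem exp_one_sub_inv_mul_add_one_div_le {a t : ℝ} (ha : 0 < a) (ht : 0 < t) :
    exp ((1 - a⁻¹) * t + 1) / a ≤ exp t / t := by
  have tangent : t / a ≤ exp (t / a - 1) := by linarith [add_one_le_exp (t / a - 1)]
  rw [div_le_div_iff₀ ha ht, ← div_le_iff₀ ha, mul_div_assoc]
  calc exp ((1 - a⁻¹) * t + 1) * (t / a)
      ≤ exp ((1 - a⁻¹) * t + 1) * exp (t / a - 1) := by gcongr
    _ = exp t := by rw [← exp_add]; ring_nf

theorem exp_four_le_seventyFive : exp 4 ≤ 75 := by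
  calc exp 4 = exp 1 ^ 4 := by rw [← exp_nat_mul]; norm_num
    _ ≤ 2.72 ^ 4 := by gcongr; linarith [exp_one_lt_d9]
    _ ≤ 75 := by norm_num

theorem le_exp_thirteen_div_six : 216 / 25 ≤ exp (13 / 6) := by
  refine le_of_pow_le_pow_left₀ (n := 6) (by norm_num) (exp_pos _).le ?_
  calc (216 / 25 : ℝ) ^ 6 ≤ 2.71 ^ 13 := by norm_num
    _ ≤ exp 1 ^ 13 := by gcongr; linarith [exp_one_gt_d9]
    _ = exp (13 / 6) ^ 6 := by rw [← exp_nat_mul, ← exp_nat_mul]; norm_num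

theorem exp_le_three_add_exp_div_three_sq (t : ℝ) :
    exp (32 / 25 * t) ≤ 3 + (exp ((1 - 3⁻¹) * t + 1) / 3) ^ 2 := by
  have shift : exp ((1 - 3⁻¹) * t + 1) ^ 2 = exp (13 / 6) * exp (4 / 3 * t - 1 / 6) := by
    rw [← exp_nat_mul, ← exp_add]; push_cast; ring_nf
  -- With the points `4 * t / 3 - δ` and `24 * δ`, any `δ` between `0.157` and `0.179` works.
  have convex := convexOn_exp.2 (Set.mem_univ (4 / 3 * t - 1 / 6)) (Set.mem_univ 4)
    (show (0 : ℝ) ≤ 24 / 25 by norm_num) (show (0 : ℝ) ≤ 1 / 25 by norm_num) (by norm_num)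
  simp only [smul_eq_mul] at convex
  calc exp (32 / 25 * t) = exp (24 / 25 * (4 / 3 * t - 1 / 6) + 1 / 25 * 4) := by ring_nf
    _ ≤ 24 / 25 * exp (4 / 3 * t - 1 / 6) + 1 / 25 * exp 4 := convex
    _ = 216 / 25 * exp (4 / 3 * t - 1 / 6) / 9 + 1 / 25 * exp 4 := by ring
    _ ≤ exp (13 / 6) * exp (4 / 3 * t - 1 / 6) / 9 + 1 / 25 * 75 := by
        gcongr
        exacts [le_exp_thirteen_div_six, exp_four_le_seventyFive]
    _ = 3 + (exp ((1 - 3⁻¹) * t + 1) / 3) ^ 2 := by rw [div_pow, shift]; ring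

theorem three_add_exp_div_sq_le_four_mul {t : ℝ} (ht : 2 ≤ t ^ 2) :
    3 + (exp t / t) ^ 2 ≤ 4 * (1 + (sinh t / t) ^ 2) := by
  have hexp : exp t * exp (-t) = 1 := by rw [← exp_add, add_neg_cancel, exp_zero]
  have expand : 4 * sinh t ^ 2 = exp t ^ 2 - 2 + exp (-t) ^ 2 := by
    rw [sinh_eq]; linear_combination -2 * hexp
  have numerators : t ^ 2 + exp t ^ 2 ≤ 2 * t ^ 2 + 4 * sinh t ^ 2 := by
    linarith [sq_nonneg (exp (-t))]
  have ht0 : 0 < t ^ 2 := by linarith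
  calc 3 + (exp t / t) ^ 2 = 2 + (t ^ 2 + exp t ^ 2) / t ^ 2 := by
        rw [add_div, div_self ht0.ne', div_pow]; ring
    _ ≤ 2 + (2 * t ^ 2 + 4 * sinh t ^ 2) / t ^ 2 := by gcongr
    _ = 4 * (1 + (sinh t / t) ^ 2) := by
        rw [add_div, mul_div_cancel_right₀ _ ht0.ne', div_pow]; ring

theorem exp_mul_le_eight_of_sq_le_two {t : ℝ} (ht : t ^ 2 ≤ 2) : exp (32 / 25 * t) ≤ 8 := by
  have hle : 32 / 25 * t ≤ 2 := by nlinarith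
  calc exp (32 / 25 * t) ≤ exp 2 := exp_le_exp.2 hle
    _ = exp 1 ^ 2 := by rw [← exp_nat_mul]; norm_num
    _ ≤ 2.72 ^ 2 := by gcongr; linarith [exp_one_lt_d9]
    _ ≤ 8 := by norm_num

theorem exp_le_four_mul_one_add_sinh_div_sq {t : ℝ} (ht : 0 < t) :
    exp (32 / 25 * t) ≤ 4 * (1 + (sinh t / t) ^ 2) := by
  rcases le_total (t ^ 2) 2 with small | large
  · have hq : 1 ≤ sinh t / t := (one_le_div ht).2 (self_le_sinh_iff.2 ht.le)
    linarith [exp_mul_le_eight_of_sq_le_two small, one_le_pow₀ (n := 2) hq]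
  · calc exp (32 / 25 * t)
        ≤ 3 + (exp ((1 - 3⁻¹) * t + 1) / 3) ^ 2 := exp_le_three_add_exp_div_three_sq t
      _ ≤ 3 + (exp t / t) ^ 2 := by
          gcongr 3 + ?_ ^ 2
          exact exp_one_sub_inv_mul_add_one_div_le three_pos ht
      _ ≤ 4 * (1 + (sinh t / t) ^ 2) := three_add_exp_div_sq_le_four_mul large

theorem le_log_two_mul_sqrt_one_add_sinh_div_sq {t : ℝ} (ht : 0 < t) :
    16 / 25 * t ≤ log (2 * √(1 + (sinh t / t) ^ 2)) := by
  rw [le_log_iff_exp_le (by positivity)]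
  refine le_of_pow_le_pow_left₀ two_ne_zero (by positivity) ?_
  calc exp (16 / 25 * t) ^ 2 = exp (32 / 25 * t) := by rw [← exp_nat_mul]; ring_nf
    _ ≤ 4 * (1 + (sinh t / t) ^ 2) := exp_le_four_mul_one_add_sinh_div_sq ht
    _ = (2 * √(1 + (sinh t / t) ^ 2)) ^ 2 := by rw [mul_pow, sq_sqrt (by positivity)]; norm_num

theorem stmt11_general (x : ℝ) (hx : 0 < x) :
    x ≤ 25 / 16 * arsinh (qf x) * √(1 + qf x ^ 2) := by
  have ht : 0 < arsinh x := arsinh_pos_iff.2 hx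
  have hq : 0 < qf x := div_pos hx ht
  have hlog : 16 / 25 * arsinh x ≤ log (2 * √(1 + qf x ^ 2)) := by
    simpa only [qf, sinh_arsinh] using le_log_two_mul_sqrt_one_add_sinh_div_sq ht
  have harsinh := mul_log_two_mul_sqrt_le_arsinh_mul_sqrt hq.le
  calc x = 25 / 16 * (qf x * (16 / 25 * arsinh x)) := by unfold qf; field_simp
    _ ≤ 25 / 16 * (qf x * log (2 * √(1 + qf x ^ 2))) := by gcongr
    _ ≤ 25 / 16 * (arsinh (qf x) * √(1 + qf x ^ 2)) := by linarith
    _ = 25 / 16 * arsinh (qf x) * √(1 + qf x ^ 2) := (mul_assoc _ _ _).symm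

theorem stmt11 : ∀ x : ℝ, 0 < x →
    x ≤ (π / 2) * Real.arsinh (qf x) * Real.sqrt (1 + qf x ^ 2) := by
  intro x hx
  have hq : 0 ≤ arsinh (qf x) := arsinh_nonneg_iff.2 (div_pos hx (arsinh_pos_iff.2 hx)).le
  have hpi : 25 / 16 ≤ π / 2 := by linarith [pi_gt_d2]
  exact (stmt11_general x hx).trans (by gcongr)
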